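/- (Mass confinement in a light cone.) Let d ≥ 1 and let u : ℝ → 𝒮(ℝ^d; ℂ) be a Schwartz solution of the linear Schrödinger equation. Let A ⊆ ℝ^d be a nonempty set with supp u(0) ⊆ A, let ε > 0, and set γ = 2‖∇u(0)‖_{L²(ℝ^d)} / ε. Then for every t > 0, ‖u(t)‖_{L²(ℝ^d ∖ {x : dist(x,A) < γ t})} ≤ ε. -/

import Mathlib

open MeasureTheory Filter
open scoped RealInnerProductSpace

noncomputable section

abbrev Ed (d : ℕ) : Type := EuclideanSpace ℝ (Fin d)

/-- The `i`-th standard basis vector of `ℝ^d`. -/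
def stdBasis {d : ℕ} (i : Fin d) : Ed d := EuclideanSpace.single i 1

/-- The `i`-th spatial partial derivative. -/
def pd {d : ℕ} (f : Ed d → ℂ) (i : Fin d) (x : Ed d) : ℂ :=
  fderiv ℝ f x (stdBasis i)

/-- The spatial Laplacian. -/
def lap {d : ℕ} (f : Ed d → ℂ) (x : Ed d) : ℂ :=
  ∑ i, pd (pd f i) i x

/-- Squared (Euclidean) pointwise norm of the spatial gradient. -/
def gradNormSq {d : ℕ} (f : Ed d → ℂ) (x : Ed d) : ℝ :=
  ∑ i, ‖pd f i x‖ ^ 2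

/-- `L²` norm of `f` restricted to a set `s`. -/
def L2On {d : ℕ} (s : Set (Ed d)) (f : Ed d → ℂ) : ℝ :=
  (∫ x in s, ‖f x‖ ^ 2) ^ (1/2 : ℝ)

/-- `L²` norm of `f` on all of `ℝ^d`. -/
def L2 {d : ℕ} (f : Ed d → ℂ) : ℝ :=
  (∫ x, ‖f x‖ ^ 2) ^ (1/2 : ℝ)

/-- `L²` norm of the spatial gradient of `f`. -/
def gradL2 {d : ℕ} (f : Ed d → ℂ) : ℝ :=
  (∫ x, gradNormSq f x) ^ (1/2 : ℝ)

/-- Distance between two sets. -/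
def setDist {d : ℕ} (A B : Set (Ed d)) : ℝ :=
  sInf (Set.image2 dist A B)

/-- A Schwartz solution of the linear Schrödinger equation:
smooth in time-space and `∂ₜ u = i Δ u`. -/
def IsLinSchrodSol (d : ℕ) (u : ℝ → SchwartzMap (Ed d) ℂ) : Prop :=
  ContDiff ℝ (⊤ : ℕ∞) (fun p : ℝ × Ed d => u p.1 p.2) ∧
  ∀ t x, deriv (fun s => u s x) t = Complex.I * lap (u t) x

/-- A Schwartz solution of the nonlinear Schrödinger equation with parameters `lam, σ`:
smooth in time-space and `∂ₜ u = i (Δ u + lam |u|^σ u)`. -/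
def IsNLSSol (d : ℕ) (lam σ : ℝ) (u : ℝ → SchwartzMap (Ed d) ℂ) : Prop :=
  ContDiff ℝ (⊤ : ℕ∞) (fun p : ℝ × Ed d => u p.1 p.2) ∧
  ∀ t x, deriv (fun s => u s x) t =
    Complex.I * (lap (u t) x + ((lam * ‖u t x‖ ^ σ : ℝ) : ℂ) * u t x)

/-!
For a solution `F` of the Schrödinger equation, `∂ₜ ‖F‖²` is the divergence of a current of size at
most `2 ‖F‖ ‖∇F‖`. Against a `K`-Lipschitz weight `g`, integration by parts and Cauchy–Schwarz show
that the `L²` norm of `g F` grows at rate at most `2 K ‖∇F‖`. Take `g = min (dist(·, A) / ρ) 1` with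
`ρ = γ t`: then `g F` vanishes at time `0`, `g = 1` outside the cone, and `2 t ‖∇u(0)‖ / ρ = ε`. If
`∇u(0) = 0` this choice degenerates, but then `u(0)` is a constant in `L²(ℝ^d)`, hence `0`.

It remains to see that `‖∇F‖` does not grow. Joint smoothness gives no control of `L²` norms that
is locally uniform in time, so mass conservation is obtained in two steps. On an interval where the
mass is bounded, mollification bounds the gradient, and the weight `1`, which is `K`-Lipschitz for
every `K > 0`, yields conservation. Since the mass is finite and lower semicontinuous in time, a
Baire category argument removes the boundedness. This applies to the mollified derivatives of `F`,
whose masses are finite because the derivative may be moved to the kernel.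
-/

open scoped ENNReal NNReal ContDiff Topology

section BaireCategory

/-- `f` takes equal values at the endpoints of every interval on which it is bounded by a finite
constant; this is what mollification shows of the mass of a solution. -/
def IsConstWhereBounded (f : ℝ → ℝ≥0∞) : Prop :=
  ∀ a b, ∀ N : ℝ≥0∞, N ≠ ⊤ → (∀ t ∈ Set.uIcc a b, f t ≤ N) → f a = f b

theorem exists_ball_inter_forall_le_of_lowerSemicontinuous {X : Type*} [PseudoMetricSpace X]
    [CompleteSpace X] {f : X → ℝ≥0∞} (hf : LowerSemicontinuous f) (hfin : ∀ x, f x ≠ ⊤)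
    {E : Set X} (hE : IsClosed E) (hne : E.Nonempty) :
    ∃ x ∈ E, ∃ r > 0, ∃ N : ℝ≥0∞, N ≠ ⊤ ∧ ∀ y ∈ E, dist y x < r → f y ≤ N := by
  have : CompleteSpace E := hE.completeSpace_coe
  have : Nonempty E := hne.to_subtype
  obtain ⟨n, x, hx⟩ := nonempty_interior_of_iUnion_of_closed
    (f := fun n : ℕ => {y : E | f y ≤ n})
    (fun n => (hf.isClosed_preimage n).preimage continuous_subtype_val)
    (Set.iUnion_eq_univ_iff.2 fun y => (ENNReal.exists_nat_gt (hfin y)).imp fun _ => le_of_lt)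
  obtain ⟨r, hr, hball⟩ := Metric.mem_nhds_iff.1 (mem_interior_iff_mem_nhds.1 hx)
  exact ⟨x, x.2, r, hr, n, ENNReal.natCast_ne_top n, fun y hy hyr => @hball ⟨y, hy⟩ hyr⟩

theorem eq_of_forall_uIcc_eventually_eq {α : Type*} {f : ℝ → α} {a b : ℝ}
    (h : ∀ t ∈ Set.uIcc a b, ∀ᶠ s in 𝓝 t, f t = f s) : f a = f b :=
  isPreconnected_uIcc.induction₂ (fun s t => f s = f t)
    (fun t ht => mem_nhdsWithin_of_mem_nhds (h t ht))
    (fun _ _ _ _ _ _ => Eq.trans) (fun _ _ _ _ => Eq.symm) Set.left_mem_uIcc Set.right_mem_uIcc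

namespace IsConstWhereBounded

variable {f : ℝ → ℝ≥0∞}

theorem eventually_eq (hf : IsConstWhereBounded f) {t r : ℝ} (hr : 0 < r) {N : ℝ≥0∞} (hN : N ≠ ⊤)
    (hball : ∀ s ∈ Metric.ball t r, f s ≤ N) : ∀ᶠ s in 𝓝 t, f t = f s := by
  filter_upwards [Metric.ball_mem_nhds t hr] with s hs
  exact hf t s N hN fun y hy => hball y <|
    (convex_ball t r).ordConnected.uIcc_subset (Metric.mem_ball_self hr) hs hy

theorem eq_of_forall_dist_le (hf : IsConstWhereBounded f) (hfin : ∀ t, f t ≠ ⊤) {E : Set ℝ}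
    (hE : ∀ t ∉ E, ∀ᶠ s in 𝓝 t, f t = f s) {t b : ℝ} (hb : ∀ y ∈ E, dist t b ≤ dist t y) :
    f t = f b := by
  refine hf t b (max (f t) (f b)) (by simp [hfin]) fun y hy => ?_
  obtain rfl | hyb := eq_or_ne y b
  · exact le_max_right _ _
  refine (eq_of_forall_uIcc_eventually_eq fun z hz => hE z fun hzE => ?_).symm.le.trans
    (le_max_left _ _)
  have hzy : dist t z ≤ dist t y := Real.dist_left_le_of_mem_uIcc hz
  have htyb : dist t y + dist y b = dist t b :=
    dist_add_dist_of_mem_segment (segment_eq_uIcc t b ▸ hy)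
  linarith [hb z hzE, dist_pos.2 hyb]

/-- By Baire, the closed set `E` of points at which `f` is not locally constant would have a
relatively open piece on which `f` is bounded; moving to the nearest point of `E` bounds `f` on a
whole ball by the same constant. -/
theorem eq_of_lowerSemicontinuous (hf : IsConstWhereBounded f) (hlsc : LowerSemicontinuous f)
    (hfin : ∀ t, f t ≠ ⊤) (a b : ℝ) : f a = f b := by
  set E : Set ℝ := {t | ∀ᶠ s in 𝓝 t, f t = f s}ᶜ with hE
  have hloc : ∀ t ∉ E, ∀ᶠ s in 𝓝 t, f t = f s := fun t ht => not_not.1 ht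
  have hclosed : IsClosed E := isOpen_compl_iff.1 <| isOpen_iff_mem_nhds.2 fun t ht => by
    filter_upwards [(hloc t ht).eventually_nhds, hloc t ht] with s hs hts
    simpa only [hE, compl_compl, Set.mem_ofPred_eq, ← hts] using hs
  obtain hempty | hne := E.eq_empty_or_nonempty
  · exact eq_of_forall_uIcc_eventually_eq fun t _ => hloc t (hempty ▸ Set.notMem_empty t)
  obtain ⟨x, hx, r, hr, N, hN, hbound⟩ :=
    exists_ball_inter_forall_le_of_lowerSemicontinuous hlsc hfin hclosed hne
  refine absurd (hf.eventually_eq (half_pos hr) hN fun t ht => ?_) hx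
  obtain ⟨b, hbE, hb⟩ := hclosed.exists_infDist_eq_dist hne t
  have hnear : ∀ y ∈ E, dist t b ≤ dist t y := fun y hy => hb ▸ Metric.infDist_le_dist_of_mem hy
  rw [hf.eq_of_forall_dist_le hfin hloc hnear]
  refine hbound b hbE ((dist_triangle_left b x t).trans_lt ?_)
  linarith [hnear x hx, Metric.mem_ball.1 ht]

end IsConstWhereBounded

end BaireCategory

theorem sqrt_le_sqrt_add_of_abs_deriv_le {m m' : ℝ → ℝ} {c r s : ℝ} (hc : 0 ≤ c)
    (hm : ∀ t, 0 ≤ m t) (hderiv : ∀ t ∈ Set.uIcc r s, HasDerivAt m (m' t) t)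
    (hbound : ∀ t ∈ Set.uIcc r s, |m' t| ≤ 2 * c * √(m t)) :
    √(m s) ≤ √(m r) + c * |s - r| := by
  -- `√` is not differentiable at `0`, so the mean value inequality is applied to `√(m + κ²)`.
  refine le_of_forall_pos_le_add fun κ hκ => ?_
  have hpos : ∀ t, 0 < m t + κ ^ 2 := fun t => add_pos_of_nonneg_of_pos (hm t) (by positivity)
  have hmono : ∀ t, √(m t) ≤ √(m t + κ ^ 2) := fun t =>
    Real.sqrt_le_sqrt (le_add_of_nonneg_right (sq_nonneg κ))
  have hslope : ∀ t ∈ Set.uIcc r s, ‖m' t / (2 * √(m t + κ ^ 2))‖ ≤ c := fun t ht => by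
    have hsqrt : 0 < √(m t + κ ^ 2) := Real.sqrt_pos.2 (hpos t)
    rw [norm_div, Real.norm_of_nonneg (by positivity : 0 ≤ 2 * √(m t + κ ^ 2)),
      div_le_iff₀ (by positivity)]
    linarith [hbound t ht, mul_le_mul_of_nonneg_left (hmono t) hc, Real.norm_eq_abs (m' t)]
  have hmean : ‖√(m s + κ ^ 2) - √(m r + κ ^ 2)‖ ≤ c * |s - r| :=
    (convex_uIcc r s).norm_image_sub_le_of_norm_hasDerivWithin_le
      (fun t ht => (((hderiv t ht).add_const _).sqrt (hpos t).ne').hasDerivWithinAt)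
      hslope Set.left_mem_uIcc Set.right_mem_uIcc
  have hsplit : √(m r + κ ^ 2) ≤ √(m r) + κ := by
    rw [Real.sqrt_le_left (by positivity)]
    nlinarith [Real.sq_sqrt (hm r), mul_nonneg (Real.sqrt_nonneg (m r)) hκ.le]
  linarith [hmono s, (Real.le_norm_self _).trans hmean]

section LipschitzWeights

variable {E : Type*} [NormedAddCommGroup E] [NormedSpace ℝ E]

open scoped Convolution in
theorem lipschitzWith_normed_convolution [MeasurableSpace E] [BorelSpace E] [FiniteDimensional ℝ E]
    {μ : Measure E} [μ.IsAddHaarMeasure] (φ : ContDiffBump (0 : E)) {g : E → ℝ} {K : ℝ≥0}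
    (hg : LipschitzWith K g) :
    LipschitzWith K (φ.normed μ ⋆[ContinuousLinearMap.lsmul ℝ ℝ, μ] g) := by
  have hint : ∀ x, Integrable (fun y => φ.normed μ y * g (x - y)) μ := fun x =>
    (φ.continuous_normed.mul (hg.continuous.comp (continuous_sub_left x)))
      |>.integrable_of_hasCompactSupport φ.hasCompactSupport_normed.mul_right
  refine LipschitzWith.of_dist_le_mul fun x x' => ?_
  simp only [Real.dist_eq, convolution_def, ContinuousLinearMap.lsmul_apply, smul_eq_mul]
  rw [← integral_sub (hint x) (hint x'), ← Real.norm_eq_abs]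
  calc ‖∫ y, φ.normed μ y * g (x - y) - φ.normed μ y * g (x' - y) ∂μ‖
      ≤ ∫ y, φ.normed μ y * (K * dist x x') ∂μ := by
        refine norm_integral_le_of_norm_le (φ.integrable_normed.mul_const _)
          (.of_forall fun y => ?_)
        rw [← mul_sub, norm_mul, Real.norm_of_nonneg (φ.nonneg_normed y)]
        gcongr
        · exact φ.nonneg_normed y
        · simpa only [dist_sub_right, Real.dist_eq, Real.norm_eq_abs]
            using hg.dist_le_mul (x - y) (x' - y)
    _ = K * dist x x' := by rw [integral_mul_const, φ.integral_normed, one_mul]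

variable [FiniteDimensional ℝ E]

theorem exists_contDiff_lipschitzWith_abs_sub_le {g : E → ℝ} {K : ℝ≥0} (hg : LipschitzWith K g)
    (hc : HasCompactSupport g) {δ : ℝ} (hδ : 0 < δ) :
    ∃ ψ : E → ℝ, ContDiff ℝ ∞ ψ ∧ HasCompactSupport ψ ∧ LipschitzWith K ψ ∧
      ∀ x, |ψ x - g x| ≤ K * δ := by
  borelize E
  let φ : ContDiffBump (0 : E) := ⟨δ / 2, δ, half_pos hδ, half_lt_self hδ⟩
  refine ⟨_, φ.hasCompactSupport_normed.contDiff_convolution_left (μ := Measure.addHaar)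
    (ContinuousLinearMap.lsmul ℝ ℝ) φ.contDiff_normed hg.continuous.locallyIntegrable,
    φ.hasCompactSupport_normed.convolution _ hc, lipschitzWith_normed_convolution φ hg,
    fun x => φ.dist_normed_convolution_le hg.continuous.aestronglyMeasurable fun y hy => ?_⟩
  exact (hg.dist_le_mul y x).trans (by gcongr; exact (Metric.mem_ball.1 hy).le)

theorem exists_seq_lipschitzWith_hasCompactSupport_eventually_eq {g : E → ℝ} {K : ℝ≥0} (hK : 0 < K)
    (hg : LipschitzWith K g) (hg0 : ∀ x, 0 ≤ g x) :
    ∃ χ : ℕ → E → ℝ, (∀ n, LipschitzWith K (χ n)) ∧ (∀ n, HasCompactSupport (χ n)) ∧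
      (∀ n x, χ n x ∈ Set.Icc 0 (g x)) ∧ ∀ x, ∀ᶠ n in atTop, χ n x = g x := by
  refine ⟨fun n x => min (g x) (max 0 (K * (n - ‖x‖))), fun n => ?_, fun n => ?_,
    fun n x => ⟨le_min (hg0 x) (le_max_left _ _), min_le_left _ _⟩, fun x => ?_⟩
  · have hcone : LipschitzWith K fun x : E => (K : ℝ) * (n - ‖x‖) :=
      LipschitzWith.of_dist_le_mul fun x y => by
        rw [Real.dist_eq, ← mul_sub, sub_sub_sub_cancel_left, abs_mul, NNReal.abs_eq, dist_comm x,
          dist_eq_norm]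
        gcongr
        exact abs_norm_sub_norm_le y x
    simpa only [max_self] using hg.min (hcone.const_max 0)
  · refine .intro (isCompact_closedBall 0 n) fun x hx => ?_
    rw [mem_closedBall_zero_iff, not_le] at hx
    have : (K : ℝ) * (n - ‖x‖) ≤ 0 := mul_nonpos_of_nonneg_of_nonpos K.2 (by linarith)
    simp only [max_eq_left this, min_eq_right (hg0 x)]
  · have hlarge : Tendsto (fun n : ℕ => (K : ℝ) * (n - ‖x‖)) atTop atTop :=
      (tendsto_atTop_add_const_right _ (-‖x‖) tendsto_natCast_atTop_atTop).const_mul_atTop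
        (NNReal.coe_pos.2 hK)
    filter_upwards [hlarge.eventually_ge_atTop (g x)] with n hn
    exact min_eq_left (hn.trans (le_max_right _ _))

theorem exists_seq_contDiff_lipschitzWith_tendsto {g : E → ℝ} {K : ℝ≥0} (hK : 0 < K)
    (hg : LipschitzWith K g) (hg0 : ∀ x, 0 ≤ g x) :
    ∃ ψ : ℕ → E → ℝ,
      (∀ n, ContDiff ℝ ∞ (ψ n) ∧ HasCompactSupport (ψ n) ∧ LipschitzWith K (ψ n)) ∧
      (∀ n x, |ψ n x| ≤ g x + K * (1 / (n + 1))) ∧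
      ∀ x, Tendsto (fun n => ψ n x) atTop (𝓝 (g x)) := by
  obtain ⟨χ, hχlip, hχsupp, hχg, hχeq⟩ :=
    exists_seq_lipschitzWith_hasCompactSupport_eventually_eq hK hg hg0
  choose ψ hsmooth hsupp hψlip hclose using fun n : ℕ =>
    exists_contDiff_lipschitzWith_abs_sub_le (hχlip n) (hχsupp n) (Nat.one_div_pos_of_nat (n := n))
  refine ⟨ψ, fun n => ⟨hsmooth n, hsupp n, hψlip n⟩, fun n x => ?_, fun x => ?_⟩
  · linarith [abs_sub_abs_le_abs_sub (ψ n x) (χ n x), hclose n x, abs_of_nonneg (hχg n x).1,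
      (hχg n x).2]
  · have hzero : Tendsto (fun n : ℕ => (K : ℝ) * (1 / (n + 1))) atTop (𝓝 0) := by
      simpa only [mul_zero] using tendsto_one_div_add_atTop_nhds_zero_nat.const_mul (K : ℝ)
    refine tendsto_iff_norm_sub_tendsto_zero.2 (squeeze_zero' (.of_forall fun n => norm_nonneg _)
      ?_ hzero)
    filter_upwards [hχeq x] with n hn
    simpa only [hn, Real.norm_eq_abs] using hclose n x

end LipschitzWeights

section PartialDerivatives

variable {E E' V : Type*} [NormedAddCommGroup E] [NormedSpace ℝ E] [NormedAddCommGroup E']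
  [NormedSpace ℝ E'] [NormedAddCommGroup V] [NormedSpace ℝ V] {F : E × E' → V} {x : E} {y : E'}

theorem fderiv_prodMk_left_apply (hF : DifferentiableAt ℝ F (x, y)) (v : E) :
    fderiv ℝ (fun x => F (x, y)) x v = fderiv ℝ F (x, y) (v, 0) :=
  DFunLike.congr_fun (hF.hasFDerivAt.comp (f := fun x => (x, y)) x
    (hasFDerivAt_prodMk_left x y)).fderiv v

theorem fderiv_prodMk_right_apply (hF : DifferentiableAt ℝ F (x, y)) (w : E') :
    fderiv ℝ (fun y => F (x, y)) y w = fderiv ℝ F (x, y) (0, w) :=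
  DFunLike.congr_fun (hF.hasFDerivAt.comp (f := fun y => (x, y)) y
    (hasFDerivAt_prodMk_right x y)).fderiv w

end PartialDerivatives

section ParametricIntegral

variable {P E V : Type*} [NormedAddCommGroup E] [NormedSpace ℝ E] [FiniteDimensional ℝ E]
  [MeasurableSpace E] [BorelSpace E] {μ : Measure E} [μ.IsAddHaarMeasure]
  [NormedAddCommGroup V] [NormedSpace ℝ V] {h : P × E → V} {k : Set E}

open scoped Convolution in
theorem integral_eq_one_convolution_zero (p : P) :
    ∫ y, h (p, y) ∂μ = ((fun _ => (1 : ℝ)) ⋆[ContinuousLinearMap.lsmul ℝ ℝ, μ]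
      fun y => h (p, y)) 0 := by
  simp only [convolution_def, ContinuousLinearMap.lsmul_apply, one_smul, zero_sub]
  exact (integral_neg_eq_self (fun y => h (p, y)) μ).symm

variable [NormedAddCommGroup P] [NormedSpace ℝ P]

theorem contDiff_integral_of_isCompact {n : ℕ∞} (hh : ContDiff ℝ n h)
    (hk : IsCompact k) (h0 : ∀ p, ∀ y ∉ k, h (p, y) = 0) :
    ContDiff ℝ n fun p => ∫ y, h (p, y) ∂μ := by
  simp only [integral_eq_one_convolution_zero]
  refine contDiffOn_univ.1 (contDiffOn_convolution_right_with_param_comp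
    (g := fun p y => h (p, y)) _ contDiffOn_const isOpen_univ hk (fun p y _ => h0 p y)
    (locallyIntegrable_const 1) ?_)
  exact hh.contDiffOn

theorem fderiv_integral_of_isCompact (hh : ContDiff ℝ 1 h) (hk : IsCompact k)
    (h0 : ∀ p, ∀ y ∉ k, h (p, y) = 0) (p v : P) :
    fderiv ℝ (fun p => ∫ y, h (p, y) ∂μ) p v = ∫ y, fderiv ℝ (fun p => h (p, y)) p v ∂μ := by
  have hderiv0 : ∀ y ∉ k, fderiv ℝ h (p, y) = 0 := fun y hy => by
    have : h =ᶠ[𝓝 (p, y)] fun _ => 0 := by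
      filter_upwards [(hk.isClosed.isOpen_compl.preimage continuous_snd).mem_nhds hy] with q hq
        using h0 q.1 q.2 hq
    rw [this.fderiv_eq, fderiv_const_apply]
  have hint : Integrable (fun y => fderiv ℝ h (p, y)) μ :=
    ((hh.continuous_fderiv one_ne_zero).comp (Continuous.prodMk_right p))
      |>.integrable_of_hasCompactSupport (.intro hk hderiv0)
  have hconv := (hasFDerivAt_convolution_right_with_param (μ := μ) (f := fun _ => (1 : ℝ))
    (ContinuousLinearMap.lsmul ℝ ℝ) (g := fun p y => h (p, y)) isOpen_univ hk
    (fun p y _ => h0 p y) (locallyIntegrable_const 1) hh.contDiffOn (p, 0) trivial).comp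
      (f := fun q => (q, 0)) p (hasFDerivAt_prodMk_left p 0)
  have hderiv : HasFDerivAt (fun p => ∫ y, h (p, y) ∂μ)
      ((∫ y, fderiv ℝ h (p, y) ∂μ).comp (.inl ℝ P E)) p := by
    convert hconv using 1
    · exact funext integral_eq_one_convolution_zero
    · congr 1
      rw [integral_eq_one_convolution_zero (h := fderiv ℝ h)]
      rfl
  rw [hderiv.fderiv, ContinuousLinearMap.comp_apply, ContinuousLinearMap.integral_apply hint]
  refine integral_congr_ae (.of_forall fun y => ?_)
  exact (fderiv_prodMk_left_apply (hh.differentiable one_ne_zero _) v).symm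

end ParametricIntegral

section DirectionalDerivatives

variable {X V : Type*} [NormedAddCommGroup X] [NormedSpace ℝ X] [NormedAddCommGroup V]
  [NormedSpace ℝ V] {F : X → V}

/-- The derivative of `F` in the direction `v`, as a function of the base point. -/
def dirDeriv (v : X) (F : X → V) (p : X) : V := fderiv ℝ F p v

theorem contDiff_dirDeriv (hF : ContDiff ℝ ∞ F) (v : X) : ContDiff ℝ ∞ (dirDeriv v F) :=
  (hF.fderiv_right (by norm_num)).clm_apply contDiff_const

theorem dirDeriv_comm (hF : ContDiff ℝ 2 F) (v w : X) :
    dirDeriv v (dirDeriv w F) = dirDeriv w (dirDeriv v F) := by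
  have hdiff : Differentiable ℝ (fderiv ℝ F) :=
    (hF.fderiv_right (m := 1) (by norm_num)).differentiable one_ne_zero
  have hsecond : ∀ v w p, dirDeriv v (dirDeriv w F) p = fderiv ℝ (fderiv ℝ F) p v w :=
    fun v w p => by
      change fderiv ℝ (fun q => fderiv ℝ F q w) p v = _
      rw [fderiv_clm_apply (hdiff p) (differentiableAt_const w), fderiv_const_apply]
      simp
  ext p
  rw [hsecond, hsecond]
  exact (hF.contDiffAt.isSymmSndFDerivAt (by simp)).eq v w

end DirectionalDerivatives

theorem eLpNorm_two_sq {X V : Type*} [MeasurableSpace X] {ν : Measure X} [NormedAddCommGroup V]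
    (f : X → V) : eLpNorm f 2 ν ^ 2 = ∫⁻ x, ‖f x‖ₑ ^ 2 ∂ν := by
  simpa using eLpNorm_nnreal_pow_eq_lintegral (μ := ν) (f := f) (p := 2) two_ne_zero

section SpaceConvolution

variable {P E V : Type*} [NormedAddCommGroup E] [MeasurableSpace E]
  [NormedAddCommGroup V] [NormedSpace ℝ V] {η : E → ℝ} {μ : Measure E} {F : P × E → V}

/-- Convolution of `F : P × E → V` with a kernel `η` in the second variable only, the first one
being a parameter (the time). -/
def spaceConv (η : E → ℝ) (μ : Measure E) (F : P × E → V) (p : P × E) : V :=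
  ∫ y, η y • F (p.1, p.2 - y) ∂μ

theorem integrable_spaceConv_integrand [TopologicalSpace P] [BorelSpace E]
    [IsFiniteMeasureOnCompacts μ] (hη : Continuous η) (hc : HasCompactSupport η)
    (hF : Continuous F) (p : P × E) : Integrable (fun y => η y • F (p.1, p.2 - y)) μ :=
  (hη.smul (hF.comp (by fun_prop))).integrable_of_hasCompactSupport hc.smul_right

section Young

variable [BorelSpace E] [SecondCountableTopology E] [SFinite μ] [μ.IsAddRightInvariant]

theorem enorm_integral_smul_sq_le {X : Type*} [MeasurableSpace X] {ν : Measure X} {w : X → ℝ}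
    {f : X → V} (hw : AEStronglyMeasurable w ν) (hf : AEStronglyMeasurable f ν) :
    ‖∫ y, w y • f y ∂ν‖ₑ ^ 2 ≤ (∫⁻ y, ‖w y‖ₑ ∂ν) * ∫⁻ y, ‖w y‖ₑ * ‖f y‖ₑ ^ 2 ∂ν := by
  have hsplit : ∀ a b : ℝ≥0∞, a * b = a ^ (1 / 2 : ℝ) * (a * b ^ 2) ^ (1 / 2 : ℝ) := fun a b => by
    rw [← ENNReal.mul_rpow_of_nonneg _ _ one_half_pos.le,
      (by ring : a * (a * b ^ 2) = (a * b) ^ 2), ← ENNReal.rpow_natCast, ← ENNReal.rpow_mul]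
    norm_num
  have hle : ‖∫ y, w y • f y ∂ν‖ₑ ≤
      (∫⁻ y, ‖w y‖ₑ ∂ν) ^ (1 / 2 : ℝ) * (∫⁻ y, ‖w y‖ₑ * ‖f y‖ₑ ^ 2 ∂ν) ^ (1 / 2 : ℝ) :=
    calc ‖∫ y, w y • f y ∂ν‖ₑ ≤ ∫⁻ y, ‖w y • f y‖ₑ ∂ν := enorm_integral_le_lintegral_enorm _
      _ = ∫⁻ y, ‖w y‖ₑ ^ (1 / 2 : ℝ) * (‖w y‖ₑ * ‖f y‖ₑ ^ 2) ^ (1 / 2 : ℝ) ∂ν := by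
          simp_rw [enorm_smul, ← hsplit]
      _ ≤ _ := ENNReal.lintegral_mul_norm_pow_le hw.enorm (hw.enorm.mul (hf.enorm.pow_const 2))
          one_half_pos.le one_half_pos.le (add_halves 1)
  refine (pow_le_pow_left₀ zero_le hle 2).trans_eq ?_
  rw [mul_pow, ← ENNReal.rpow_mul_natCast, ← ENNReal.rpow_mul_natCast]
  norm_num

theorem eLpNorm_spaceConv_le [TopologicalSpace P] (hη : Continuous η) (hF : Continuous F) (t : P) :
    eLpNorm (fun x => spaceConv η μ F (t, x)) 2 μ ≤
      (∫⁻ y, ‖η y‖ₑ ∂μ) * eLpNorm (fun x => F (t, x)) 2 μ := by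
  have hFt : Continuous fun q : E × E => F (t, q.1 - q.2) := hF.comp (by fun_prop)
  have hmeas : Measurable fun q : E × E => ‖η q.2‖ₑ * ‖F (t, q.1 - q.2)‖ₑ ^ 2 :=
    (hη.enorm.measurable.comp measurable_snd).mul (hFt.enorm.measurable.pow_const 2)
  rw [← ENNReal.pow_le_pow_left_iff two_ne_zero, mul_pow, eLpNorm_two_sq, eLpNorm_two_sq]
  calc ∫⁻ x, ‖spaceConv η μ F (t, x)‖ₑ ^ 2 ∂μ
      ≤ ∫⁻ x, (∫⁻ y, ‖η y‖ₑ ∂μ) * ∫⁻ y, ‖η y‖ₑ * ‖F (t, x - y)‖ₑ ^ 2 ∂μ ∂μ :=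
        lintegral_mono fun x => enorm_integral_smul_sq_le hη.aestronglyMeasurable
          (hFt.comp (Continuous.prodMk_right x)).aestronglyMeasurable
    _ = (∫⁻ y, ‖η y‖ₑ ∂μ) * ∫⁻ y, ∫⁻ x, ‖η y‖ₑ * ‖F (t, x - y)‖ₑ ^ 2 ∂μ ∂μ := by
        rw [lintegral_const_mul _ hmeas.lintegral_prod_right',
          lintegral_lintegral_swap hmeas.aemeasurable]
    _ = (∫⁻ y, ‖η y‖ₑ ∂μ) * ∫⁻ y, ‖η y‖ₑ * ∫⁻ x, ‖F (t, x)‖ₑ ^ 2 ∂μ ∂μ := by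
        congr! 3 with y
        rw [lintegral_const_mul' _ _ enorm_ne_top,
          lintegral_sub_right_eq_self (fun x => ‖F (t, x)‖ₑ ^ 2) y]
    _ = (∫⁻ y, ‖η y‖ₑ ∂μ) ^ 2 * ∫⁻ x, ‖F (t, x)‖ₑ ^ 2 ∂μ := by
        rw [lintegral_mul_const _ hη.enorm.measurable, ← mul_assoc, sq]

end Young

variable [NormedSpace ℝ E] [FiniteDimensional ℝ E] [BorelSpace E] [μ.IsAddHaarMeasure]

section Mollification

variable [TopologicalSpace P]

variable (E) in
/-- The sequence of bump functions with outer radius `1 / (n + 1)`, whose normalizations form an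
approximate identity. -/
def mollifier (n : ℕ) : ContDiffBump (0 : E) :=
  ⟨1 / (n + 1) / 2, 1 / (n + 1), half_pos Nat.one_div_pos_of_nat,
    half_lt_self Nat.one_div_pos_of_nat⟩

theorem tendsto_spaceConv_mollifier [CompleteSpace V] (hF : Continuous F) (p : P × E) :
    Tendsto (fun n => spaceConv ((mollifier E n).normed μ) μ F p) atTop (𝓝 (F p)) :=
  ContDiffBump.convolution_tendsto_right_of_continuous (φ := mollifier E) (μ := μ)
    (g := fun x => F (p.1, x)) tendsto_one_div_add_atTop_nhds_zero_nat (by fun_prop) p.2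

theorem eLpNorm_spaceConv_normed_le (φ : ContDiffBump (0 : E)) (hF : Continuous F) (t : P) :
    eLpNorm (fun x => spaceConv (φ.normed μ) μ F (t, x)) 2 μ ≤ eLpNorm (fun x => F (t, x)) 2 μ := by
  have hone : ∫⁻ y, ‖φ.normed μ y‖ₑ ∂μ = 1 := by
    simp_rw [Real.enorm_of_nonneg (φ.nonneg_normed _)]
    rw [← ofReal_integral_eq_lintegral_ofReal φ.integrable_normed
      (.of_forall fun y => φ.nonneg_normed y), φ.integral_normed, ENNReal.ofReal_one]
  have hyoung := eLpNorm_spaceConv_le (η := φ.normed μ) (μ := μ) φ.continuous_normed hF t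
  rwa [hone, one_mul] at hyoung

end Mollification

variable [NormedAddCommGroup P] [NormedSpace ℝ P]

theorem contDiff_spaceConv {n : ℕ∞} (hη : ContDiff ℝ n η) (hc : HasCompactSupport η)
    (hF : ContDiff ℝ n F) : ContDiff ℝ n (spaceConv η μ F) :=
  contDiff_integral_of_isCompact
    (h := fun q : (P × E) × E => η q.2 • F (q.1.1, q.1.2 - q.2)) (by fun_prop) hc
    fun p y hy => by simp only [image_eq_zero_of_notMem_tsupport hy, zero_smul]

theorem dirDeriv_spaceConv (hη : ContDiff ℝ 1 η) (hc : HasCompactSupport η)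
    (hF : ContDiff ℝ 1 F) (v : P × E) :
    dirDeriv v (spaceConv η μ F) = spaceConv η μ (dirDeriv v F) := by
  ext p
  refine (fderiv_integral_of_isCompact
    (h := fun q : (P × E) × E => η q.2 • F (q.1.1, q.1.2 - q.2)) (by fun_prop) hc
    (fun p y hy => by simp only [image_eq_zero_of_notMem_tsupport hy, zero_smul]) p v).trans ?_
  refine integral_congr_ae (.of_forall fun y => ?_)
  have htranslate : (fun p : P × E => F (p.1, p.2 - y)) = fun p => F (p - (0, y)) :=
    funext fun p => by simp only [Prod.sub_def, sub_zero]
  have hdiff : DifferentiableAt ℝ (fun p => F (p - (0, y))) p :=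
    (hF.differentiable one_ne_zero _).comp p (differentiableAt_id.sub_const _)
  change fderiv ℝ (η y • fun p : P × E => F (p.1, p.2 - y)) p v = η y • fderiv ℝ F (p.1, p.2 - y) v
  rw [htranslate, fderiv_const_smul hdiff, fderiv_comp_sub, Prod.sub_def, sub_zero]
  rfl

theorem spaceConv_dirDeriv (hη : ContDiff ℝ 1 η) (hc : HasCompactSupport η)
    (hF : ContDiff ℝ 1 F) (w : E) :
    spaceConv η μ (dirDeriv (0, w) F) = spaceConv (dirDeriv w η) μ F := by
  ext ⟨t, x⟩
  have hFx : ContDiff ℝ 1 fun y => F (t, y) := hF.comp (by fun_prop)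
  have hreflect : ContDiff ℝ 1 fun y => F (t, x - y) := hFx.comp (by fun_prop)
  have hslice : ∀ y, fderiv ℝ (fun y => F (t, x - y)) y w = -fderiv ℝ F (t, x - y) (0, w) :=
    fun y => by
      have hcomp : fderiv ℝ (fun y => F (t, x - y)) y = _ :=
        fderiv_comp (g := fun y => F (t, y)) (f := fun y => x - y) y
          (hFx.differentiable one_ne_zero _) (differentiableAt_id.const_sub x)
      rw [hcomp, fderiv_const_sub, fderiv_fun_id, ContinuousLinearMap.comp_neg,
        ContinuousLinearMap.comp_id, neg_apply,
        fderiv_prodMk_right_apply (hF.differentiable one_ne_zero _)]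
  have hη' : Continuous fun y => fderiv ℝ η y w := by fun_prop
  have hparts := integral_smul_fderiv_eq_neg_fderiv_smul_of_integrable (μ := μ) (f := η)
    (g := fun y => F (t, x - y)) (v := w)
    ((hη'.smul hreflect.continuous).integrable_of_hasCompactSupport
      (hc.fderiv_apply (𝕜 := ℝ) w).smul_right)
    ((hη.continuous.smul (by fun_prop)).integrable_of_hasCompactSupport hc.smul_right)
    ((hη.continuous.smul hreflect.continuous).integrable_of_hasCompactSupport hc.smul_right)
    (fun y _ => hη.differentiable one_ne_zero y)
    (fun y _ => hreflect.differentiable one_ne_zero y)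
  simpa only [spaceConv, dirDeriv, hslice, smul_neg, integral_neg, neg_inj] using hparts

end SpaceConvolution

section SchrodingerSolutions

variable {d : ℕ}

/-- The `i`-th spatial coordinate direction in space-time. -/
def spaceDir (i : Fin d) : ℝ × Ed d := (0, stdBasis i)

/-- Classical solutions of `∂ₜ F = i Δ F` on space-time, without any decay in space. -/
structure IsSchrodingerSol (F : ℝ × Ed d → ℂ) : Prop where
  contDiff : ContDiff ℝ ∞ F
  equation : ∀ p, dirDeriv (1, 0) F p =
    Complex.I * ∑ i, dirDeriv (spaceDir i) (dirDeriv (spaceDir i) F) p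

/-- The spatial gradient of `F` as a function on space-time, with the Euclidean norm on `ℂ^d`. -/
def spaceGrad (F : ℝ × Ed d → ℂ) (p : ℝ × Ed d) : EuclideanSpace ℂ (Fin d) :=
  WithLp.toLp 2 fun i => dirDeriv (spaceDir i) F p

/-- The vector field `J` on space-time for which the mass density of a solution `F` of the
Schrödinger equation satisfies `∂ₜ ‖F‖² = 2 div J`; explicitly, `J = -Im (conj F ∇F)`. -/
def massCurrent (F : ℝ × Ed d → ℂ) (p : ℝ × Ed d) : Ed d :=
  WithLp.toLp 2 fun i => ⟪F p, Complex.I * dirDeriv (spaceDir i) F p⟫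

variable {F : ℝ × Ed d → ℂ}

theorem continuous_spaceGrad (hF : ContDiff ℝ ∞ F) : Continuous (spaceGrad F) :=
  (PiLp.continuous_toLp 2 _).comp <| continuous_pi fun i =>
    (contDiff_dirDeriv hF (spaceDir i)).continuous

theorem contDiff_massCurrent (hF : ContDiff ℝ ∞ F) : ContDiff ℝ ∞ (massCurrent F) :=
  contDiff_euclidean.2 fun i =>
    hF.inner ℝ (contDiff_const.mul (contDiff_dirDeriv hF (spaceDir i)))

theorem norm_massCurrent_le (p : ℝ × Ed d) : ‖massCurrent F p‖ ≤ ‖F p‖ * ‖spaceGrad F p‖ := by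
  rw [EuclideanSpace.norm_eq, EuclideanSpace.norm_eq, Real.sqrt_le_left (by positivity), mul_pow,
    Real.sq_sqrt (by positivity), Finset.mul_sum]
  gcongr with i
  rw [← mul_pow]
  gcongr
  refine (abs_real_inner_le_norm _ _).trans_eq ?_
  rw [norm_mul, Complex.norm_I, one_mul]
  rfl

theorem real_inner_I_mul_self (z : ℂ) : ⟪z, Complex.I * z⟫ = 0 := by
  simp only [Complex.inner, Complex.mul_re, Complex.mul_im, Complex.I_re, Complex.I_im,
    Complex.conj_re, Complex.conj_im]
  ring

namespace IsSchrodingerSol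

theorem dirDeriv_spaceDir (hF : IsSchrodingerSol F) (i : Fin d) :
    IsSchrodingerSol (dirDeriv (spaceDir i) F) := by
  have hsmooth := contDiff_dirDeriv hF.contDiff
  have hsmooth₂ := fun j => contDiff_dirDeriv (hsmooth (spaceDir j)) (spaceDir j)
  have hcomm : ∀ {H : ℝ × Ed d → ℂ}, ContDiff ℝ ∞ H → ∀ v w,
      dirDeriv v (dirDeriv w H) = dirDeriv w (dirDeriv v H) := fun hH v w =>
    dirDeriv_comm (mod_cast contDiff_infty.1 hH 2) v w
  refine ⟨hsmooth _, fun p => ?_⟩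
  have hderiv := (HasFDerivAt.fun_sum fun j (_ : j ∈ Finset.univ) =>
    ((hsmooth₂ j).differentiable (by simp) p).hasFDerivAt).const_mul Complex.I
  calc dirDeriv (1, 0) (dirDeriv (spaceDir i) F) p
      = dirDeriv (spaceDir i) (fun q => Complex.I *
          ∑ j, dirDeriv (spaceDir j) (dirDeriv (spaceDir j) F) q) p := by
        rw [hcomm hF.contDiff, funext hF.equation]
    _ = Complex.I * ∑ j,
          dirDeriv (spaceDir i) (dirDeriv (spaceDir j) (dirDeriv (spaceDir j) F)) p := by
        rw [dirDeriv, hderiv.fderiv]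
        simp [dirDeriv]
    _ = _ := by
        simp_rw [hcomm (hsmooth _) (spaceDir i), hcomm hF.contDiff (spaceDir i)]

theorem convolution (hF : IsSchrodingerSol F) {η : Ed d → ℝ} (hη : ContDiff ℝ ∞ η)
    (hc : HasCompactSupport η) : IsSchrodingerSol (spaceConv η volume F) := by
  have hderiv : ∀ {H : ℝ × Ed d → ℂ}, ContDiff ℝ ∞ H → ∀ v,
      dirDeriv v (spaceConv η volume H) = spaceConv η volume (dirDeriv v H) := fun hH v =>
    dirDeriv_spaceConv (hη.of_le (by norm_num)) hc (hH.of_le (by norm_num)) v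
  refine ⟨contDiff_spaceConv hη hc hF.contDiff, fun p => ?_⟩
  have hsmooth := fun i => contDiff_dirDeriv hF.contDiff (spaceDir i)
  simp_rw [hderiv hF.contDiff, hderiv (hsmooth _)]
  unfold spaceConv
  rw [← integral_finsetSum _ fun i _ => integrable_spaceConv_integrand hη.continuous hc
    (contDiff_dirDeriv (hsmooth i) _).continuous p, ← integral_const_mul]
  refine integral_congr_ae (.of_forall fun y => ?_)
  simp only [hF.equation, ← Finset.smul_sum, mul_smul_comm]

theorem dirDeriv_norm_sq (hF : IsSchrodingerSol F) (p : ℝ × Ed d) :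
    dirDeriv (1, 0) (fun q => ‖F q‖ ^ 2) p =
      2 * ∑ i, dirDeriv (spaceDir i) (fun q => massCurrent F q i) p := by
  have hdiff : DifferentiableAt ℝ F p := hF.contDiff.differentiable (by simp) p
  have hcurrent : ∀ i, dirDeriv (spaceDir i) (fun q => massCurrent F q i) p =
      ⟪F p, Complex.I * dirDeriv (spaceDir i) (dirDeriv (spaceDir i) F) p⟫ := fun i => by
    have hdiff' : DifferentiableAt ℝ (dirDeriv (spaceDir i) F) p :=
      (contDiff_dirDeriv hF.contDiff _).differentiable (by simp) p
    have horth := real_inner_I_mul_self (dirDeriv (spaceDir i) F p)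
    change fderiv ℝ (fun q => ⟪F q, Complex.I * dirDeriv (spaceDir i) F q⟫) p _ = _
    rw [fderiv_inner_apply ℝ hdiff (hdiff'.const_mul _), fderiv_const_mul hdiff']
    simpa only [dirDeriv, _root_.smul_apply, smul_eq_mul, add_eq_left] using horth
  simp_rw [hcurrent, ← inner_sum, ← Finset.mul_sum, ← hF.equation, dirDeriv]
  rw [hdiff.hasFDerivAt.norm_sq.fderiv]
  simp [-Complex.inner]

end IsSchrodingerSol

end SchrodingerSolutions

section WeightedMass

theorem integral_sq_mul_fderiv {E : Type*} [NormedAddCommGroup E] [NormedSpace ℝ E]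
    [FiniteDimensional ℝ E] [MeasurableSpace E] [BorelSpace E] {μ : Measure E} [μ.IsAddHaarMeasure]
    {ψ g : E → ℝ} (hψ : ContDiff ℝ 1 ψ) (hc : HasCompactSupport ψ) (hg : ContDiff ℝ 1 g) (v : E) :
    ∫ x, ψ x ^ 2 * fderiv ℝ g x v ∂μ = -2 * ∫ x, ψ x * (fderiv ℝ ψ x v * g x) ∂μ := by
  have hψ' : Continuous fun x => fderiv ℝ ψ x v := by fun_prop
  have hg' : Continuous fun x => fderiv ℝ g x v := by fun_prop
  have hint : ∀ {f : E → ℝ}, Continuous f → Integrable (fun x => ψ x * f x) μ := fun hf =>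
    (hψ.continuous.mul hf).integrable_of_hasCompactSupport hc.mul_right
  have hsq : ∀ x, fderiv ℝ (fun y => ψ y * ψ y) x v = 2 * (ψ x * fderiv ℝ ψ x v) := fun x => by
    rw [fderiv_fun_mul (hψ.differentiable one_ne_zero x) (hψ.differentiable one_ne_zero x)]
    simp only [_root_.add_apply, _root_.smul_apply, smul_eq_mul]
    ring
  simp_rw [sq]
  rw [integral_mul_fderiv_eq_neg_fderiv_mul_of_integrable]
  · simp_rw [hsq, mul_assoc, integral_const_mul, neg_mul]
  · simp_rw [hsq, mul_assoc]
    exact (hint (hψ'.mul hg.continuous)).const_mul 2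
  · simp_rw [mul_assoc]
    exact hint (hψ.continuous.mul hg')
  · simp_rw [mul_assoc]
    exact hint (hψ.continuous.mul hg.continuous)
  · exact fun x _ => (hψ.mul hψ).differentiable one_ne_zero x
  · exact fun x _ => hg.differentiable one_ne_zero x

variable {d : ℕ} {F : ℝ × Ed d → ℂ} {ψ : Ed d → ℝ}

theorem sum_smul_stdBasis (x : Ed d) : ∑ i, x i • stdBasis i = x := by
  simpa [stdBasis] using (EuclideanSpace.basisFun (Fin d) ℝ).sum_repr x

theorem integral_sq_mul_divergence {J : Ed d → Ed d} (hψ : ContDiff ℝ 1 ψ)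
    (hc : HasCompactSupport ψ) (hJ : ContDiff ℝ 1 J) :
    ∫ x, ψ x ^ 2 * ∑ i, fderiv ℝ (fun y => J y i) x (stdBasis i) =
      -2 * ∫ x, ψ x * fderiv ℝ ψ x (J x) := by
  have hcomp : ∀ i, ContDiff ℝ 1 fun y => J y i := contDiff_euclidean.1 hJ
  have hint : ∀ {a f : Ed d → ℝ}, Continuous a → Continuous f →
      Integrable fun x => ψ x * (a x * f x) := fun ha hf =>
    (hψ.continuous.mul (ha.mul hf)).integrable_of_hasCompactSupport hc.mul_right
  have hexpand : ∀ x, fderiv ℝ ψ x (J x) = ∑ i, fderiv ℝ ψ x (stdBasis i) * J x i := fun x => by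
    conv_lhs => rw [← sum_smul_stdBasis (J x), map_sum]
    simp only [map_smul, smul_eq_mul, mul_comm]
  have hJ' : ∀ i, Continuous fun x => fderiv ℝ (fun y => J y i) x (stdBasis i) := fun i =>
    ((hcomp i).continuous_fderiv one_ne_zero).clm_apply continuous_const
  have hintJ' : ∀ i, Integrable fun x =>
      ψ x ^ 2 * fderiv ℝ (fun y => J y i) x (stdBasis i) := fun i => by
    simpa only [sq, mul_assoc] using hint hψ.continuous (hJ' i)
  simp_rw [hexpand, Finset.mul_sum]
  rw [integral_finsetSum _ fun i _ => hintJ' i,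
    integral_finsetSum _ fun i _ => hint (by fun_prop) (hcomp i).continuous, Finset.mul_sum]
  exact Finset.sum_congr rfl fun i _ => integral_sq_mul_fderiv hψ hc (hcomp i) (stdBasis i)

theorem IsSchrodingerSol.hasDerivAt_norm_sq (hF : IsSchrodingerSol F) (t : ℝ) (x : Ed d) :
    HasDerivAt (fun t => ‖F (t, x)‖ ^ 2)
      (2 * ∑ i, fderiv ℝ (fun y => massCurrent F (t, y) i) x (stdBasis i)) t := by
  have hnorm : Differentiable ℝ fun q => ‖F q‖ ^ 2 :=
    (hF.contDiff.norm_sq ℝ).differentiable (by simp)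
  have hJi : ∀ i, Differentiable ℝ fun q => massCurrent F q i := fun i =>
    (contDiff_euclidean.1 (contDiff_massCurrent hF.contDiff) i).differentiable (by simp)
  have hslice : DifferentiableAt ℝ (fun t => ‖F (t, x)‖ ^ 2) t :=
    (hnorm (t, x)).comp (f := fun t => (t, x)) t (hasFDerivAt_prodMk_left t x).differentiableAt
  refine hslice.hasDerivAt.congr_deriv ?_
  rw [← fderiv_apply_one_eq_deriv, fderiv_prodMk_left_apply (hnorm _)]
  refine (hF.dirDeriv_norm_sq (t, x)).trans ?_
  simp only [dirDeriv, spaceDir, ← fderiv_prodMk_right_apply (hJi _ _)]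

theorem IsSchrodingerSol.hasDerivAt_integral_sq_mul_norm_sq (hF : IsSchrodingerSol F)
    (hψ : ContDiff ℝ 1 ψ) (hc : HasCompactSupport ψ) (t : ℝ) :
    HasDerivAt (fun t => ∫ x, ψ x ^ 2 * ‖F (t, x)‖ ^ 2)
      (-4 * ∫ x, ψ x * fderiv ℝ ψ x (massCurrent F (t, x))) t := by
  have hh : ContDiff ℝ 1 fun q : ℝ × Ed d => ψ q.2 ^ 2 * ‖F q‖ ^ 2 :=
    ((hψ.comp contDiff_snd).pow 2).mul ((hF.contDiff.norm_sq ℝ).of_le (by norm_num))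
  have hzero : ∀ t, ∀ x ∉ tsupport ψ, ψ x ^ 2 * ‖F (t, x)‖ ^ 2 = 0 := fun t x hx => by
    rw [image_eq_zero_of_notMem_tsupport hx, zero_pow two_ne_zero, zero_mul]
  have hJ : ContDiff ℝ 1 fun x => massCurrent F (t, x) :=
    ((contDiff_massCurrent hF.contDiff).of_le (by norm_num)).comp (contDiff_prodMk_right t)
  have hdiff := (contDiff_integral_of_isCompact (μ := volume) hh hc hzero).differentiable
    one_ne_zero t
  refine hdiff.hasDerivAt.congr_deriv ?_
  rw [← fderiv_apply_one_eq_deriv, fderiv_integral_of_isCompact hh hc hzero]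
  simp_rw [fderiv_apply_one_eq_deriv, ((hF.hasDerivAt_norm_sq t _).const_mul _).deriv,
    mul_left_comm _ (2 : ℝ), integral_const_mul]
  rw [integral_sq_mul_divergence hψ hc hJ]
  ring

end WeightedMass

section WeightedEstimate

theorem sqrt_integral_norm_sq {X V : Type*} [MeasurableSpace X] {ν : Measure X}
    [NormedAddCommGroup V] {f : X → V} (hf : AEStronglyMeasurable f ν) :
    √(∫ x, ‖f x‖ ^ 2 ∂ν) = (eLpNorm f 2 ν).toReal := by
  have henorm : ∀ x, ENNReal.ofReal (‖f x‖ ^ 2) = ‖f x‖ₑ ^ 2 := fun x => by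
    rw [ENNReal.ofReal_pow (norm_nonneg _), ofReal_norm]
  rw [integral_eq_lintegral_of_nonneg_ae (.of_forall fun x => sq_nonneg _) (hf.norm.pow 2)]
  simp_rw [henorm, ← eLpNorm_two_sq, ENNReal.toReal_pow]
  exact Real.sqrt_sq ENNReal.toReal_nonneg

theorem eLpNorm_smul_le_of_abs_le_add {X V : Type*} [MeasurableSpace X] {ν : Measure X}
    [NormedAddCommGroup V] [NormedSpace ℝ V] {ψ g : X → ℝ} {f : X → V} {δ : ℝ} {p : ℝ≥0∞}
    (hg0 : ∀ x, 0 ≤ g x) (hδ : 0 ≤ δ) (hψ : ∀ x, |ψ x| ≤ g x + δ) (hp : 1 ≤ p)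
    (hg : AEStronglyMeasurable g ν) (hf : AEStronglyMeasurable f ν) :
    eLpNorm (fun x => ψ x • f x) p ν ≤
      eLpNorm (fun x => g x • f x) p ν + ENNReal.ofReal δ * eLpNorm f p ν :=
  calc eLpNorm (fun x => ψ x • f x) p ν
      ≤ eLpNorm ((fun x => g x • f x) + δ • f) p ν := by
        refine eLpNorm_mono fun x => ?_
        rw [Pi.add_apply, Pi.smul_apply, ← add_smul, norm_smul, norm_smul,
          Real.norm_of_nonneg (add_nonneg (hg0 x) hδ)]
        gcongr
        exact hψ x
    _ ≤ eLpNorm (fun x => g x • f x) p ν + ENNReal.ofReal δ * eLpNorm f p ν := by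
        refine (eLpNorm_add_le (hg.smul hf) (hf.const_smul δ) hp).trans_eq ?_
        rw [eLpNorm_const_smul, Real.enorm_of_nonneg hδ]
        rfl

variable {d : ℕ} {F : ℝ × Ed d → ℂ} {ψ : Ed d → ℝ} {K G : ℝ≥0} {r s t : ℝ}

/-- The `L²` norm of `F` at time `t`, extended-valued so that it makes sense without integrability
in space. -/
def sliceNorm {V : Type*} [NormedAddCommGroup V] (F : ℝ × Ed d → V) (t : ℝ) : ℝ≥0∞ :=
  eLpNorm (fun x => F (t, x)) 2 volume

theorem enorm_integral_mul_fderiv_massCurrent_le (hF : ContDiff ℝ ∞ F) (hψ : Continuous ψ)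
    (hK : LipschitzWith K ψ) (t : ℝ) :
    ‖∫ x, ψ x * fderiv ℝ ψ x (massCurrent F (t, x))‖ₑ ≤
      K * (eLpNorm (fun x => ψ x • F (t, x)) 2 volume * sliceNorm (spaceGrad F) t) := by
  have hFt : Continuous fun x => F (t, x) := hF.continuous.comp (by fun_prop)
  have hgrad : Continuous fun x => spaceGrad F (t, x) :=
    (continuous_spaceGrad hF).comp (by fun_prop)
  have hpoint : ∀ x, ‖ψ x * fderiv ℝ ψ x (massCurrent F (t, x))‖ ≤
      K * ‖‖ψ x • F (t, x)‖ • ‖spaceGrad F (t, x)‖‖ := fun x =>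
    calc ‖ψ x * fderiv ℝ ψ x (massCurrent F (t, x))‖
        ≤ ‖ψ x‖ * (K * (‖F (t, x)‖ * ‖spaceGrad F (t, x)‖)) := by
          rw [norm_mul]
          gcongr
          exact (ContinuousLinearMap.le_opNorm _ _).trans (mul_le_mul
            (norm_fderiv_le_of_lipschitz ℝ hK) (norm_massCurrent_le _) (norm_nonneg _) K.2)
      _ = K * ‖‖ψ x • F (t, x)‖ • ‖spaceGrad F (t, x)‖‖ := by
          rw [norm_smul, norm_norm, norm_norm, norm_smul]
          ring
  calc ‖∫ x, ψ x * fderiv ℝ ψ x (massCurrent F (t, x))‖ₑ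
      ≤ eLpNorm (fun x => ψ x * fderiv ℝ ψ x (massCurrent F (t, x))) 1 volume := by
        rw [eLpNorm_one_eq_lintegral_enorm]
        exact enorm_integral_le_lintegral_enorm _
    _ ≤ K * eLpNorm ((fun x => ‖ψ x • F (t, x)‖) • fun x => ‖spaceGrad F (t, x)‖) 1 volume := by
        rw [← ENNReal.ofReal_coe_nnreal]
        exact eLpNorm_le_mul_eLpNorm_of_ae_le_mul (.of_forall hpoint) 1
    _ ≤ K * (eLpNorm (fun x => ψ x • F (t, x)) 2 volume * sliceNorm (spaceGrad F) t) := by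
        refine mul_le_mul_right ?_ _
        refine (eLpNorm_smul_le_mul_eLpNorm (p := 2) (q := 2) hgrad.norm.aestronglyMeasurable
          (hψ.smul hFt).norm.aestronglyMeasurable).trans_eq ?_
        rw [eLpNorm_norm, eLpNorm_norm]
        rfl

namespace IsSchrodingerSol

theorem eLpNorm_smul_le_of_contDiff (hF : IsSchrodingerSol F) (hψ : ContDiff ℝ 1 ψ)
    (hc : HasCompactSupport ψ) (hK : LipschitzWith K ψ)
    (hG : ∀ t ∈ Set.uIcc r s, sliceNorm (spaceGrad F) t ≤ G) :
    eLpNorm (fun x => ψ x • F (s, x)) 2 volume ≤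
      eLpNorm (fun x => ψ x • F (r, x)) 2 volume + ENNReal.ofReal (2 * K * G * |s - r|) := by
  have hcont : ∀ t, Continuous fun x => ψ x • F (t, x) := fun t =>
    hψ.continuous.smul (hF.contDiff.continuous.comp (by fun_prop))
  have hfin : ∀ t, eLpNorm (fun x => ψ x • F (t, x)) 2 volume ≠ ⊤ := fun t =>
    ((hcont t).memLp_of_hasCompactSupport hc.smul_right).eLpNorm_ne_top
  have hsqrt : ∀ t, √(∫ x, ψ x ^ 2 * ‖F (t, x)‖ ^ 2) =
      (eLpNorm (fun x => ψ x • F (t, x)) 2 volume).toReal := fun t => by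
    rw [← sqrt_integral_norm_sq (hcont t).aestronglyMeasurable]
    simp only [norm_smul, mul_pow, Real.norm_eq_abs, sq_abs]
  have hflux : ∀ t ∈ Set.uIcc r s, |-4 * ∫ x, ψ x * fderiv ℝ ψ x (massCurrent F (t, x))| ≤
      2 * (2 * K * G) * √(∫ x, ψ x ^ 2 * ‖F (t, x)‖ ^ 2) := fun t ht => by
    have hle := (enorm_integral_mul_fderiv_massCurrent_le hF.contDiff hψ.continuous hK t).trans
      (mul_le_mul_right (mul_le_mul_right (hG t ht) _) _)
    have hreal := ENNReal.toReal_mono (by finiteness [hfin t]) hle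
    simp only [toReal_enorm, ENNReal.toReal_mul, ENNReal.coe_toReal, ← hsqrt] at hreal
    rw [abs_mul, ← Real.norm_eq_abs (integral _ _), abs_of_neg (by norm_num : (-4 : ℝ) < 0)]
    linarith
  have hmean := sqrt_le_sqrt_add_of_abs_deriv_le (by positivity)
    (fun t => integral_nonneg fun x => by positivity)
    (fun t _ => hF.hasDerivAt_integral_sq_mul_norm_sq hψ hc t) hflux
  rw [hsqrt, hsqrt] at hmean
  rw [← ENNReal.ofReal_toReal (hfin s), ← ENNReal.ofReal_toReal (hfin r),
    ← ENNReal.ofReal_add ENNReal.toReal_nonneg (by positivity)]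
  exact ENNReal.ofReal_le_ofReal hmean

theorem eLpNorm_smul_le (hF : IsSchrodingerSol F) {g : Ed d → ℝ} (hK : 0 < K)
    (hg : LipschitzWith K g) (hg0 : ∀ x, 0 ≤ g x) (hr : sliceNorm F r ≠ ⊤)
    (hG : ∀ t ∈ Set.uIcc r s, sliceNorm (spaceGrad F) t ≤ G) :
    eLpNorm (fun x => g x • F (s, x)) 2 volume ≤
      eLpNorm (fun x => g x • F (r, x)) 2 volume + ENNReal.ofReal (2 * K * G * |s - r|) := by
  obtain ⟨ψ, hψ, hψg, hlim⟩ := exists_seq_contDiff_lipschitzWith_tendsto hK hg hg0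
  have hcont : ∀ t, Continuous fun x => F (t, x) := fun t =>
    hF.contDiff.continuous.comp (by fun_prop)
  set δ : ℕ → ℝ := fun n => K * (1 / (n + 1))
  have hδ0 : ∀ n, 0 ≤ δ n := fun n => by positivity
  have hinitial : ∀ n, eLpNorm (fun x => ψ n x • F (r, x)) 2 volume ≤
      eLpNorm (fun x => g x • F (r, x)) 2 volume + ENNReal.ofReal (δ n) * sliceNorm F r := fun n =>
    eLpNorm_smul_le_of_abs_le_add hg0 (hδ0 n) (hψg n) one_le_two
      hg.continuous.aestronglyMeasurable (hcont r).aestronglyMeasurable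
  have hbound : Tendsto (fun n => eLpNorm (fun x => g x • F (r, x)) 2 volume +
      ENNReal.ofReal (δ n) * sliceNorm F r + ENNReal.ofReal (2 * K * G * |s - r|)) atTop
      (𝓝 (eLpNorm (fun x => g x • F (r, x)) 2 volume + ENNReal.ofReal (2 * K * G * |s - r|))) := by
    have hδlim : Tendsto δ atTop (𝓝 0) := by
      simpa only [mul_zero] using tendsto_one_div_add_atTop_nhds_zero_nat.const_mul (K : ℝ)
    have := ENNReal.Tendsto.mul_const (ENNReal.tendsto_ofReal hδlim) (.inr hr)
    simpa using (this.const_add _).add_const _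
  calc eLpNorm (fun x => g x • F (s, x)) 2 volume
      ≤ liminf (fun n => eLpNorm (fun x => ψ n x • F (s, x)) 2 volume) atTop :=
        Lp.eLpNorm_lim_le_liminf_eLpNorm
          (fun n => ((hψ n).1.continuous.smul (hcont s)).aestronglyMeasurable) _
          (.of_forall fun x => (hlim x).smul_const _)
    _ ≤ _ := (liminf_le_liminf (.of_forall fun n => (hF.eLpNorm_smul_le_of_contDiff
        ((hψ n).1.of_le (by norm_num)) (hψ n).2.1 (hψ n).2.2 hG).trans
          (add_le_add_left (hinitial n) _))).trans_eq hbound.liminf_eq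

end IsSchrodingerSol

end WeightedEstimate

section Conservation

variable {d : ℕ} {F : ℝ × Ed d → ℂ}

theorem lowerSemicontinuous_sliceNorm (hF : Continuous F) :
    LowerSemicontinuous (sliceNorm F) :=
  lowerSemicontinuous_iff_isClosed_preimage.2 fun C => IsSeqClosed.isClosed fun τ t hτ hlim =>
    Lp.eLpNorm_le_of_ae_tendsto (.of_forall hτ)
      (fun n => (hF.comp (by fun_prop)).aestronglyMeasurable)
      (.of_forall fun x => ((hF.comp (Continuous.prodMk_left x)).tendsto t).comp hlim)

theorem sliceNorm_spaceGrad_sq (hF : ContDiff ℝ ∞ F) (t : ℝ) :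
    sliceNorm (spaceGrad F) t ^ 2 = ∑ i, sliceNorm (dirDeriv (spaceDir i) F) t ^ 2 := by
  have hnorm : ∀ x, ‖spaceGrad F (t, x)‖ₑ ^ 2 =
      ∑ i, ‖dirDeriv (spaceDir i) F (t, x)‖ₑ ^ 2 := fun x => by
    simp only [enorm_eq_nnnorm, EuclideanSpace.nnnorm_eq]
    exact_mod_cast NNReal.sq_sqrt _
  simp_rw [sliceNorm, eLpNorm_two_sq, hnorm]
  refine lintegral_finsetSum _ fun i _ => ?_
  exact (((contDiff_dirDeriv hF _).continuous.comp
    (Continuous.prodMk_right t)).enorm.measurable.pow_const 2)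

theorem sliceNorm_spaceGrad_le_sum (hF : ContDiff ℝ ∞ F) (t : ℝ) :
    sliceNorm (spaceGrad F) t ≤ ∑ i, sliceNorm (dirDeriv (spaceDir i) F) t := by
  rw [← ENNReal.pow_le_pow_left_iff two_ne_zero, sliceNorm_spaceGrad_sq hF]
  exact Finset.sum_sq_le_sq_sum_of_nonneg fun _ _ => zero_le

theorem sliceNorm_le_of_forall_mollifier_le (hF : ContDiff ℝ ∞ F) {t : ℝ} {C : ℝ≥0∞}
    (hC : ∀ n, sliceNorm (spaceConv ((mollifier (Ed d) n).normed volume) volume F) t ≤ C) :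
    sliceNorm F t ≤ C :=
  Lp.eLpNorm_le_of_ae_tendsto (.of_forall hC)
    (fun n => ((contDiff_spaceConv (mollifier (Ed d) n).contDiff_normed
      (mollifier (Ed d) n).hasCompactSupport_normed hF).continuous.comp
        (Continuous.prodMk_right t)).aestronglyMeasurable)
    (.of_forall fun x => tendsto_spaceConv_mollifier hF.continuous (t, x))

section Kernel

variable {η : Ed d → ℝ}

theorem lintegral_enorm_dirDeriv_ne_top (hη : ContDiff ℝ ∞ η) (hc : HasCompactSupport η)
    (v : Ed d) : ∫⁻ y, ‖dirDeriv v η y‖ₑ ≠ ⊤ :=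
  ((contDiff_dirDeriv hη v).continuous.integrable_of_hasCompactSupport
    (hc.fderiv_apply (𝕜 := ℝ) v)).hasFiniteIntegral.ne

theorem sliceNorm_spaceConv_dirDeriv_le (hF : ContDiff ℝ ∞ F) (hη : ContDiff ℝ ∞ η)
    (hc : HasCompactSupport η) (i : Fin d) (t : ℝ) :
    sliceNorm (spaceConv η volume (dirDeriv (spaceDir i) F)) t ≤
      (∫⁻ y, ‖dirDeriv (stdBasis i) η y‖ₑ) * sliceNorm F t := by
  rw [spaceDir, spaceConv_dirDeriv (hη.of_le (by norm_num)) hc (hF.of_le (by norm_num))]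
  exact eLpNorm_spaceConv_le (contDiff_dirDeriv hη _).continuous hF.continuous t

theorem sliceNorm_spaceGrad_spaceConv_le (hF : ContDiff ℝ ∞ F) (hη : ContDiff ℝ ∞ η)
    (hc : HasCompactSupport η) (t : ℝ) :
    sliceNorm (spaceGrad (spaceConv η volume F)) t ≤
      (∑ i, ∫⁻ y, ‖dirDeriv (stdBasis i) η y‖ₑ) * sliceNorm F t := by
  rw [Finset.sum_mul]
  refine (sliceNorm_spaceGrad_le_sum (contDiff_spaceConv hη hc hF) t).trans
    (Finset.sum_le_sum fun i _ => ?_)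
  rw [dirDeriv_spaceConv (hη.of_le (by norm_num)) hc (hF.of_le (by norm_num))]
  exact sliceNorm_spaceConv_dirDeriv_le hF hη hc i t

end Kernel

namespace IsSchrodingerSol

theorem sliceNorm_le_of_gradient_le (hF : IsSchrodingerSol F) {G : ℝ≥0} {r s : ℝ}
    (hG : ∀ t ∈ Set.uIcc r s, sliceNorm (spaceGrad F) t ≤ G) : sliceNorm F s ≤ sliceNorm F r := by
  obtain hr | hr := eq_or_ne (sliceNorm F r) ⊤
  · exact hr ▸ le_top
  have hle : ∀ n : ℕ, sliceNorm F s ≤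
      sliceNorm F r + ENNReal.ofReal (2 * (1 / (n + 1)) * G * |s - r|) := fun n => by
    simpa [sliceNorm] using hF.eLpNorm_smul_le (K := 1 / (n + 1)) (g := fun _ => 1) (by positivity)
      (LipschitzWith.const' 1) (fun _ => zero_le_one) hr hG
  have hlim : Tendsto (fun n : ℕ => 2 * (1 / ((n : ℝ) + 1)) * G * |s - r|) atTop (𝓝 0) := by
    simpa only [mul_zero, zero_mul] using
      ((tendsto_one_div_add_atTop_nhds_zero_nat.const_mul (2 : ℝ)).mul_const (G : ℝ)).mul_const
        |s - r|
  refine ge_of_tendsto' (x := atTop) ?_ hle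
  simpa using (ENNReal.tendsto_ofReal hlim).const_add (sliceNorm F r)

theorem sliceNorm_le_of_bounded (hF : IsSchrodingerSol F) {N : ℝ≥0∞} (hN : N ≠ ⊤) {r s : ℝ}
    (hbound : ∀ t ∈ Set.uIcc r s, sliceNorm F t ≤ N) : sliceNorm F s ≤ sliceNorm F r := by
  refine sliceNorm_le_of_forall_mollifier_le hF.contDiff fun n => ?_
  set φ := mollifier (Ed d) n
  have hφ : ContDiff ℝ ∞ (φ.normed volume) := φ.contDiff_normed
  have hc : HasCompactSupport (φ.normed volume) := φ.hasCompactSupport_normed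
  have hconst : (∑ i, ∫⁻ y, ‖dirDeriv (stdBasis i) (φ.normed volume) y‖ₑ) * N ≠ ⊤ :=
    ENNReal.mul_ne_top
      (ENNReal.sum_ne_top.2 fun i _ => lintegral_enorm_dirDeriv_ne_top hφ hc _) hN
  have hgrad : ∀ t ∈ Set.uIcc r s, sliceNorm (spaceGrad (spaceConv (φ.normed volume) volume F)) t ≤
      (ENNReal.toNNReal _ : ℝ≥0) := fun t ht => by
    rw [ENNReal.coe_toNNReal hconst]
    exact (sliceNorm_spaceGrad_spaceConv_le hF.contDiff hφ hc t).trans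
      (mul_le_mul_right (hbound t ht) _)
  exact ((hF.convolution hφ hc).sliceNorm_le_of_gradient_le hgrad).trans
    (eLpNorm_spaceConv_normed_le φ hF.contDiff.continuous r)

theorem sliceNorm_eq (hF : IsSchrodingerSol F) (hfin : ∀ t, sliceNorm F t ≠ ⊤) (r s : ℝ) :
    sliceNorm F r = sliceNorm F s := by
  have hlocal : IsConstWhereBounded (sliceNorm F) := fun r s N hN hbound =>
    (hF.sliceNorm_le_of_bounded hN (Set.uIcc_comm r s ▸ hbound)).antisymm
      (hF.sliceNorm_le_of_bounded hN hbound)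
  exact hlocal.eq_of_lowerSemicontinuous (lowerSemicontinuous_sliceNorm hF.contDiff.continuous)
    hfin r s

theorem sliceNorm_dirDeriv_le (hF : IsSchrodingerSol F) (hfin : ∀ t, sliceNorm F t ≠ ⊤) (i : Fin d)
    (r s : ℝ) : sliceNorm (dirDeriv (spaceDir i) F) s ≤ sliceNorm (dirDeriv (spaceDir i) F) r := by
  have hDF := hF.dirDeriv_spaceDir i
  refine sliceNorm_le_of_forall_mollifier_le hDF.contDiff fun n => ?_
  set φ := mollifier (Ed d) n
  have hφ : ContDiff ℝ ∞ (φ.normed volume) := φ.contDiff_normed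
  have hc : HasCompactSupport (φ.normed volume) := φ.hasCompactSupport_normed
  have hfin' : ∀ t,
      sliceNorm (spaceConv (φ.normed volume) volume (dirDeriv (spaceDir i) F)) t ≠ ⊤ := fun t =>
    ne_top_of_le_ne_top (ENNReal.mul_ne_top (lintegral_enorm_dirDeriv_ne_top hφ hc _) (hfin t))
      (sliceNorm_spaceConv_dirDeriv_le hF.contDiff hφ hc i t)
  exact ((hDF.convolution hφ hc).sliceNorm_eq hfin' s r).trans_le
    (eLpNorm_spaceConv_normed_le φ hDF.contDiff.continuous r)

theorem sliceNorm_spaceGrad_le (hF : IsSchrodingerSol F) (hfin : ∀ t, sliceNorm F t ≠ ⊤)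
    (r s : ℝ) : sliceNorm (spaceGrad F) s ≤ sliceNorm (spaceGrad F) r := by
  rw [← ENNReal.pow_le_pow_left_iff two_ne_zero, sliceNorm_spaceGrad_sq hF.contDiff,
    sliceNorm_spaceGrad_sq hF.contDiff]
  gcongr with i
  exact hF.sliceNorm_dirDeriv_le hfin i r s

end IsSchrodingerSol

end Conservation

section LightCone

theorem lipschitzWith_min_infDist_div_one {X : Type*} [PseudoMetricSpace X] (A : Set X) (ρ : ℝ≥0) :
    LipschitzWith ρ⁻¹ fun x => min (Metric.infDist x A / ρ) 1 := by
  refine LipschitzWith.min_const (.of_dist_le_mul fun x y => ?_) 1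
  have h := (Metric.lipschitz_infDist_pt A).dist_le_mul x y
  rw [NNReal.coe_one, one_mul, Real.dist_eq] at h
  rw [Real.dist_eq, ← sub_div, abs_div, NNReal.abs_eq, div_eq_inv_mul, NNReal.coe_inv]
  gcongr

theorem eq_zero_of_fderiv_eq_zero_of_memLp {E V : Type*} [NormedAddCommGroup E] [NormedSpace ℝ E]
    [MeasurableSpace E] [NormedAddCommGroup V] [NormedSpace ℝ V] {μ : Measure E}
    (hμ : μ Set.univ = ⊤) {f : E → V} {p : ℝ≥0∞} (hp : p ≠ 0) (hp' : p ≠ ⊤)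
    (hf : Differentiable ℝ f) (hfderiv : ∀ x, fderiv ℝ f x = 0) (hfp : MemLp f p μ) : f = 0 := by
  funext x
  have hconst : f = fun _ => f x := funext fun y => is_const_of_fderiv_eq_zero hf hfderiv y x
  rw [hconst, memLp_const_iff hp hp', hμ] at hfp
  simpa using hfp

variable {d : ℕ} {F : ℝ × Ed d → ℂ}

theorem pd_slice (hF : Differentiable ℝ F) (t : ℝ) (i : Fin d) :
    pd (fun x => F (t, x)) i = fun x => dirDeriv (spaceDir i) F (t, x) :=
  funext fun x => fderiv_prodMk_right_apply (hF (t, x)) (stdBasis i)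

theorem gradNormSq_slice (hF : Differentiable ℝ F) (t : ℝ) (x : Ed d) :
    gradNormSq (fun y => F (t, y)) x = ‖spaceGrad F (t, x)‖ ^ 2 := by
  simp only [gradNormSq, pd_slice hF, EuclideanSpace.norm_sq_eq, spaceGrad]

theorem fderiv_eq_zero_of_gradNormSq_eq_zero {f : Ed d → ℂ} {x : Ed d} (h : gradNormSq f x = 0) :
    fderiv ℝ f x = 0 := by
  have hpd : ∀ i, pd f i x = 0 := by
    simpa [gradNormSq, Finset.sum_eq_zero_iff_of_nonneg, sq_nonneg] using h
  ext y
  rw [← sum_smul_stdBasis y, map_sum]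
  simpa only [map_smul, zero_apply] using Finset.sum_eq_zero fun i _ => by
    rw [← pd, hpd, smul_zero]

theorem gradL2_slice (hF : ContDiff ℝ ∞ F) (t : ℝ) :
    gradL2 (fun x => F (t, x)) = (sliceNorm (spaceGrad F) t).toReal := by
  have hgrad : Continuous fun x => spaceGrad F (t, x) :=
    (continuous_spaceGrad hF).comp (Continuous.prodMk_right t)
  rw [gradL2, ← Real.sqrt_eq_rpow, sliceNorm, ← sqrt_integral_norm_sq hgrad.aestronglyMeasurable]
  simp_rw [gradNormSq_slice (hF.differentiable (by simp))]

theorem L2On_eq_toReal_eLpNorm {f : Ed d → ℂ} (hf : AEStronglyMeasurable f volume)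
    (s : Set (Ed d)) : L2On s f = (eLpNorm f 2 (volume.restrict s)).toReal := by
  rw [L2On, ← Real.sqrt_eq_rpow, sqrt_integral_norm_sq hf.restrict]

theorem sliceNorm_spaceGrad_ne_top (hF : ContDiff ℝ ∞ F) {t : ℝ}
    (h : Integrable (gradNormSq fun x => F (t, x))) : sliceNorm (spaceGrad F) t ≠ ⊤ := by
  refine ((memLp_two_iff_integrable_sq_norm
    ((continuous_spaceGrad hF).comp (Continuous.prodMk_right t)).aestronglyMeasurable).2
      ?_).eLpNorm_ne_top
  exact h.congr (.of_forall fun x => gradNormSq_slice (hF.differentiable (by simp)) t x)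

theorem slice_eq_zero_of_sliceNorm_spaceGrad_eq_zero (hd : 1 ≤ d) (hF : ContDiff ℝ ∞ F) {t : ℝ}
    (hmem : MemLp (fun x => F (t, x)) 2) (h : sliceNorm (spaceGrad F) t = 0) :
    (fun x => F (t, x)) = 0 := by
  have hgrad : Continuous fun x => spaceGrad F (t, x) :=
    (continuous_spaceGrad hF).comp (Continuous.prodMk_right t)
  have hzero : (fun x => spaceGrad F (t, x)) = 0 := (hgrad.ae_eq_iff_eq volume continuous_zero).1
    ((eLpNorm_eq_zero_iff hgrad.aestronglyMeasurable two_ne_zero).1 h)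
  have : Nonempty (Fin d) := ⟨⟨0, hd⟩⟩
  have : NoncompactSpace (Ed d) := NormedSpace.noncompactSpace ℝ (Ed d)
  refine eq_zero_of_fderiv_eq_zero_of_memLp (measure_univ_of_isAddLeftInvariant volume)
    two_ne_zero ENNReal.ofNat_ne_top ?_ (fun x => fderiv_eq_zero_of_gradNormSq_eq_zero ?_) hmem
  · exact (hF.comp (contDiff_prodMk_right t)).differentiable (by simp)
  · rw [gradNormSq_slice (hF.differentiable (by simp)), congrFun hzero x, Pi.zero_apply, norm_zero,
      zero_pow two_ne_zero]

theorem isSchrodingerSol_uncurry {u : ℝ → Ed d → ℂ} (hu : ContDiff ℝ ∞ (Function.uncurry u))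
    (heq : ∀ t x, deriv (fun s => u s x) t = Complex.I * lap (u t) x) :
    IsSchrodingerSol (Function.uncurry u) := by
  refine ⟨hu, fun ⟨t, x⟩ => ?_⟩
  have hdiff : Differentiable ℝ (Function.uncurry u) := hu.differentiable (by simp)
  have htime : deriv (fun s => u s x) t = dirDeriv (1, 0) (Function.uncurry u) (t, x) := by
    rw [← fderiv_apply_one_eq_deriv]
    exact fderiv_prodMk_left_apply (hdiff (t, x)) 1
  rw [← htime, heq, lap]
  congr! 2 with i
  have hpd : pd (u t) i = fun x => dirDeriv (spaceDir i) (Function.uncurry u) (t, x) :=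
    pd_slice hdiff t i
  rw [hpd, pd_slice ((contDiff_dirDeriv hu _).differentiable (by simp))]

theorem integrable_gradNormSq_schwartz (f : SchwartzMap (Ed d) ℂ) : Integrable (gradNormSq f) := by
  have hfderiv := (SchwartzMap.fderivCLM ℝ (Ed d) ℂ f).memLp 2 (volume : Measure (Ed d))
  refine integrable_finsetSum _ fun i _ => ?_
  have hpd : MemLp (pd f i) 2 := (ContinuousLinearMap.apply ℝ ℂ (stdBasis i)).comp_memLp' hfderiv
  exact (memLp_two_iff_integrable_sq_norm hpd.1).1 hpd

theorem IsSchrodingerSol.eLpNorm_restrict_infDist_lt_compl_le (hF : IsSchrodingerSol F)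
    {A : Set (Ed d)} {ρ G : ℝ≥0} {r s : ℝ} (hρ : 0 < ρ) (hr : sliceNorm F r ≠ ⊤)
    (hsupp : Function.support (fun x => F (r, x)) ⊆ A)
    (hG : ∀ t ∈ Set.uIcc r s, sliceNorm (spaceGrad F) t ≤ G) :
    eLpNorm (fun x => F (s, x)) 2 (volume.restrict {x | Metric.infDist x A < ρ}ᶜ) ≤
      ENNReal.ofReal (2 * G * |s - r| / ρ) := by
  set g : Ed d → ℝ := fun x => min (Metric.infDist x A / ρ) 1
  have hg0 : ∀ x, 0 ≤ g x := fun x =>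
    le_min (div_nonneg Metric.infDist_nonneg ρ.2) zero_le_one
  have hinitial : (fun x => g x • F (r, x)) = 0 := funext fun x => by
    by_cases hx : F (r, x) = 0
    · rw [hx, smul_zero, Pi.zero_apply]
    · simp [g, Metric.infDist_zero_of_mem (hsupp hx)]
  have houtside : ∀ x ∈ {x | Metric.infDist x A < ρ}ᶜ, g x = 1 := fun x hx =>
    min_eq_right ((one_le_div (NNReal.coe_pos.2 hρ)).2 (not_lt.1 hx))
  have hmeas : MeasurableSet {x : Ed d | Metric.infDist x A < ρ}ᶜ :=
    (isOpen_lt (Metric.continuous_infDist_pt A) continuous_const).measurableSet.compl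
  calc eLpNorm (fun x => F (s, x)) 2 (volume.restrict {x | Metric.infDist x A < ρ}ᶜ)
      = eLpNorm (fun x => g x • F (s, x)) 2
          (volume.restrict {x | Metric.infDist x A < ρ}ᶜ) := by
        refine eLpNorm_congr_ae ((ae_restrict_iff' hmeas).2 (.of_forall fun x hx => ?_))
        simp only [houtside x hx, one_smul]
    _ ≤ eLpNorm (fun x => g x • F (s, x)) 2 volume := eLpNorm_restrict_le ..
    _ ≤ eLpNorm (fun x => g x • F (r, x)) 2 volume + ENNReal.ofReal (2 * ↑ρ⁻¹ * G * |s - r|) :=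
        hF.eLpNorm_smul_le (inv_pos.2 hρ) (lipschitzWith_min_infDist_div_one A ρ) hg0 hr hG
    _ = ENNReal.ofReal (2 * G * |s - r| / ρ) := by
        rw [hinitial, eLpNorm_zero, zero_add, NNReal.coe_inv]
        congr 1
        ring

end LightCone

theorem mass_confinement_light_cone_linear_general {d : ℕ} (hd : 1 ≤ d) {u : ℝ → Ed d → ℂ}
    (hu : ContDiff ℝ ∞ (Function.uncurry u))
    (heq : ∀ t x, deriv (fun s => u s x) t = Complex.I * lap (u t) x)
    (hmass : ∀ t, MemLp (u t) 2) (henergy : Integrable (gradNormSq (u 0)))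
    {A : Set (Ed d)} (hsupp : Function.support (u 0) ⊆ A) {ε : ℝ} (hε : 0 < ε)
    {γ : ℝ} (hγ : γ = 2 * gradL2 (u 0) / ε) {t : ℝ} (ht : 0 < t) :
    L2On {x | Metric.infDist x A < γ * t}ᶜ (u t) ≤ ε := by
  have hF := isSchrodingerSol_uncurry hu heq
  have hfin : ∀ s, sliceNorm (Function.uncurry u) s ≠ ⊤ := fun s => (hmass s).eLpNorm_ne_top
  rw [L2On_eq_toReal_eLpNorm (hmass t).1]
  refine ENNReal.toReal_le_of_le_ofReal hε.le ?_
  lift sliceNorm (spaceGrad (Function.uncurry u)) 0 to ℝ≥0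
    using sliceNorm_spaceGrad_ne_top hu henergy with G hG
  have hγG : γ = 2 * G / ε := by
    rw [hγ, ← ENNReal.coe_toReal G, hG]
    exact congrArg (2 * · / ε) (gradL2_slice hu 0)
  obtain rfl | hGpos := eq_zero_or_pos G
  · have hu0 : u 0 = 0 :=
      slice_eq_zero_of_sliceNorm_spaceGrad_eq_zero hd hu (hmass 0) (hG ▸ ENNReal.coe_zero)
    have hut : eLpNorm (u t) 2 volume = eLpNorm (u 0) 2 volume := hF.sliceNorm_eq hfin t 0
    rw [hu0, eLpNorm_zero] at hut
    exact (eLpNorm_restrict_le ..).trans (hut.trans_le zero_le)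
  · have hρ : 0 < γ * t := by rw [hγG]; positivity
    have hcone := hF.eLpNorm_restrict_infDist_lt_compl_le (Real.toNNReal_pos.2 hρ) (hfin 0) hsupp
      (s := t) fun s _ => (hF.sliceNorm_spaceGrad_le hfin 0 s).trans_eq hG.symm
    rw [Real.coe_toNNReal _ hρ.le, sub_zero, abs_of_pos ht, hγG] at hcone
    rw [hγG]
    refine hcone.trans_eq (congrArg _ ?_)
    field_simp

/-- Mass confinement in a light cone: if `supp u(0) ⊆ A`, `ε > 0` and
`γ = 2‖∇u(0)‖₂/ε`, then for every `t > 0` the mass of `u(t)` outside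
`{x : dist(x,A) < γ t}` is at most `ε`. -/
theorem mass_confinement_light_cone_linear
    {d : ℕ} (hd : 1 ≤ d) (u : ℝ → SchwartzMap (Ed d) ℂ)
    (hu : IsLinSchrodSol d u)
    (A : Set (Ed d)) (hA : A.Nonempty)
    (hsupp : Function.support (⇑(u 0)) ⊆ A)
    (ε : ℝ) (hε : 0 < ε)
    (γ : ℝ) (hγ : γ = 2 * gradL2 (fun x => u 0 x) / ε)
    (t : ℝ) (ht : 0 < t) :
    L2On ({x : Ed d | Metric.infDist x A < γ * t}ᶜ) (fun x => u t x) ≤ ε :=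
  mass_confinement_light_cone_linear_general (u := fun s => u s) hd hu.1 hu.2
    (fun s => (u s).memLp 2) (integrable_gradNormSq_schwartz (u 0)) hsupp hε hγ ht
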